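/- Let h be a positive integer and let 𝔅 be the 2h×2h complex matrix given in block form by 𝔅 = [[O_h, (1/2)I_h],[(1/2)I_h, O_h]]. Let g be a 2h×2h complex matrix with block form g = [[g₁₁, g₁₂],[g₂₁, g₂₂]] (h×h blocks) satisfying gᵗ·𝔅·g = 𝔅, and let U be an h×h skew-symmetric complex matrix such that the matrix g₁₁ᵗ + U·g₁₂ᵗ is invertible. Then the matrix (g₁₁ᵗ + U·g₁₂ᵗ)⁻¹·(g₂₁ᵗ + U·g₂₂ᵗ) is skew-symmetric. -/

import Mathlib

open Matrix

/-- The matrix `𝔅 = [[O_h, (1/2)I_h],[(1/2)I_h, O_h]]` of the quadratic form. -/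
noncomputable def Bmat (h : ℕ) : Matrix (Fin h ⊕ Fin h) (Fin h ⊕ Fin h) ℂ :=
  Matrix.fromBlocks 0 ((1 / 2 : ℂ) • 1) ((1 / 2 : ℂ) • 1) 0

/-!
The rows of `[I | U]` span a totally isotropic subspace for `𝔅` exactly when `U` is skew-symmetric.
Right multiplication by `gᵗ`, for `g` orthogonal, and left multiplication by any matrix both
preserve total isotropy of the rows. Starting from `[I | U]`, the first yields `[A | C]` with
`A = g₁₁ᵗ + U·g₁₂ᵗ` and `C = g₂₁ᵗ + U·g₂₂ᵗ`, and left multiplication by `A⁻¹` leads back to the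
chart, at `[I | A⁻¹·C]`.
-/

section RowsIsotropic

variable {R l m n : Type*} [CommRing R] [Fintype n]

/-- The rows of `M` are pairwise orthogonal, and each is isotropic, for the bilinear form with
matrix `B`; a subspace of a quadratic space is thus recorded by a matrix whose rows span it. -/
def RowsIsotropic (B : Matrix n n R) (M : Matrix m n R) : Prop :=
  M * B * Mᵀ = 0

theorem RowsIsotropic.mul_left [Fintype m] {B : Matrix n n R} {M : Matrix m n R}
    (hM : RowsIsotropic B M) (P : Matrix l m R) : RowsIsotropic B (P * M) := by
  calc P * M * B * (P * M)ᵀ = P * (M * B * Mᵀ) * Pᵀ := by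
        simp only [transpose_mul, Matrix.mul_assoc]
    _ = 0 := by rw [hM, Matrix.mul_zero, Matrix.zero_mul]

theorem rowsIsotropic_mul_transpose_iff [Fintype l] {B : Matrix l l R} {g : Matrix l n R}
    {M : Matrix m n R} : RowsIsotropic B (M * gᵀ) ↔ RowsIsotropic (gᵀ * B * g) M := by
  simp only [RowsIsotropic, transpose_mul, transpose_transpose, Matrix.mul_assoc]

end RowsIsotropic

section HyperbolicForm

variable {R n : Type*} [CommRing R] [DecidableEq n]

/-- The matrix `[[O, c·I], [c·I, O]]` of the split symmetric bilinear form scaled by `c`; the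
matrix `𝔅` is the case `c = 1/2`. -/
def hyperbolicForm (n : Type*) [DecidableEq n] (c : R) : Matrix (n ⊕ n) (n ⊕ n) R :=
  fromBlocks 0 (c • 1) (c • 1) 0

variable [Fintype n]

theorem fromCols_mul_hyperbolicForm_mul_transpose {m : Type*} (c : R) (A C : Matrix m n R) :
    fromCols A C * hyperbolicForm n c * (fromCols A C)ᵀ = c • (C * Aᵀ + A * Cᵀ) := by
  simp only [hyperbolicForm, fromCols_mul_fromBlocks, transpose_fromCols, fromCols_mul_fromRows,
    Matrix.mul_zero, Matrix.mul_smul, Matrix.mul_one, Matrix.smul_mul, zero_add, add_zero, smul_add]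

theorem rowsIsotropic_fromCols_one_iff {c : R} (hc : IsSMulRegular R c) {U : Matrix n n R} :
    RowsIsotropic (hyperbolicForm n c) (fromCols (1 : Matrix n n R) U) ↔ Uᵀ = -U := by
  have smul_cancel : c • (U + Uᵀ) = 0 ↔ U + Uᵀ = 0 :=
    ⟨hc.matrix.right_eq_zero_of_smul, fun h ↦ by rw [h, smul_zero]⟩
  rw [RowsIsotropic, fromCols_mul_hyperbolicForm_mul_transpose, transpose_one, Matrix.mul_one,
    Matrix.one_mul, smul_cancel, add_comm, add_eq_zero_iff_eq_neg]

theorem fromCols_one_mul_transpose_fromBlocks (g₁₁ g₁₂ g₂₁ g₂₂ U : Matrix n n R) :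
    fromCols (1 : Matrix n n R) U * (fromBlocks g₁₁ g₁₂ g₂₁ g₂₂)ᵀ =
      fromCols (g₁₁ᵀ + U * g₁₂ᵀ) (g₂₁ᵀ + U * g₂₂ᵀ) := by
  simp only [fromBlocks_transpose, fromCols_mul_fromBlocks, Matrix.one_mul]

theorem nonsing_inv_mul_fromCols {A : Matrix n n R} (hA : IsUnit A) {m : Type*}
    (C : Matrix n m R) : A⁻¹ * fromCols A C = fromCols 1 (A⁻¹ * C) := by
  rw [mul_fromCols, nonsing_inv_mul A ((isUnit_iff_isUnit_det A).mp hA)]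

theorem action_skew_general {c : R} (hc : IsSMulRegular R c) {g₁₁ g₁₂ g₂₁ g₂₂ U : Matrix n n R}
    (hg : (fromBlocks g₁₁ g₁₂ g₂₁ g₂₂)ᵀ * hyperbolicForm n c * fromBlocks g₁₁ g₁₂ g₂₁ g₂₂
      = hyperbolicForm n c)
    (hU : Uᵀ = -U) (hinv : IsUnit (g₁₁ᵀ + U * g₁₂ᵀ)) :
    ((g₁₁ᵀ + U * g₁₂ᵀ)⁻¹ * (g₂₁ᵀ + U * g₂₂ᵀ))ᵀ =
      -((g₁₁ᵀ + U * g₁₂ᵀ)⁻¹ * (g₂₁ᵀ + U * g₂₂ᵀ)) := by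
  have isotropic_chart : RowsIsotropic (hyperbolicForm n c) (fromCols (1 : Matrix n n R) U) :=
    (rowsIsotropic_fromCols_one_iff hc).mpr hU
  have isotropic_image : RowsIsotropic (hyperbolicForm n c)
      (fromCols (g₁₁ᵀ + U * g₁₂ᵀ) (g₂₁ᵀ + U * g₂₂ᵀ)) := by
    rwa [← fromCols_one_mul_transpose_fromBlocks, rowsIsotropic_mul_transpose_iff, hg]
  rw [← rowsIsotropic_fromCols_one_iff hc, ← nonsing_inv_mul_fromCols hinv]
  exact isotropic_image.mul_left _

end HyperbolicForm

/-- If `g = [[g₁₁,g₁₂],[g₂₁,g₂₂]]` is orthogonal for `𝔅` and `U` is skew-symmetric with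
`g₁₁ᵗ + U·g₁₂ᵗ` invertible, then `(g₁₁ᵗ + U·g₁₂ᵗ)⁻¹·(g₂₁ᵗ + U·g₂₂ᵗ)` is skew-symmetric. -/
theorem action_skew (h : ℕ) (hh : 0 < h)
    (g₁₁ g₁₂ g₂₁ g₂₂ U : Matrix (Fin h) (Fin h) ℂ)
    (hg : (Matrix.fromBlocks g₁₁ g₁₂ g₂₁ g₂₂)ᵀ * Bmat h * Matrix.fromBlocks g₁₁ g₁₂ g₂₁ g₂₂
      = Bmat h)
    (hU : Uᵀ = -U) (hinv : IsUnit (g₁₁ᵀ + U * g₁₂ᵀ)) :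
    ((g₁₁ᵀ + U * g₁₂ᵀ)⁻¹ * (g₂₁ᵀ + U * g₂₂ᵀ))ᵀ =
      -((g₁₁ᵀ + U * g₁₂ᵀ)⁻¹ * (g₂₁ᵀ + U * g₂₂ᵀ)) := by
  have half_regular : IsSMulRegular ℂ (1 / 2 : ℂ) := .of_ne_zero (by norm_num)
  exact action_skew_general half_regular hg hU hinv
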